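/- Let (E,𝒞,r) be a semimatroid without loops. Then w_0(𝒞) = 1 and w_i(𝒞) > 0 for every 0 ≤ i ≤ r(𝒞); in other words, the coefficients of the characteristic polynomial χ(𝒞;t) are all nonzero and strictly alternate in sign, starting with leading coefficient 1. -/

import Mathlib

/-- A semimatroid on a finite ground set `E`: a nonempty, subset-closed collection `C`
of "central" subsets of `E`, together with a rank function `r` satisfying (SR1)-(SR5). -/
structure Semimatroid (E : Type*) [DecidableEq E] [Fintype E] where
  C : Finset (Finset E)
  r : Finset E → ℕ
  C_nonempty : C.Nonempty
  mem_of_subset : ∀ ⦃X Y : Finset E⦄, X ∈ C → Y ⊆ X → Y ∈ C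
  r_le_card : ∀ ⦃X : Finset E⦄, X ∈ C → r X ≤ X.card
  r_mono : ∀ ⦃X Y : Finset E⦄, X ∈ C → Y ∈ C → X ⊆ Y → r X ≤ r Y
  submodular : ∀ ⦃X Y : Finset E⦄, X ∈ C → Y ∈ C → X ∪ Y ∈ C →
    r (X ∩ Y) + r (X ∪ Y) ≤ r X + r Y
  union_mem : ∀ ⦃X Y : Finset E⦄, X ∈ C → Y ∈ C → r X = r (X ∩ Y) → X ∪ Y ∈ C
  augment : ∀ ⦃X Y : Finset E⦄, X ∈ C → Y ∈ C → r X < r Y →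
    ∃ e ∈ Y \ X, insert e X ∈ C

namespace Semimatroid

variable {E : Type*} [DecidableEq E] [Fintype E] (S : Semimatroid E)

/-- The rank `r(𝒞)` of the semimatroid: the common rank of the maximal central sets. -/
def rank : ℕ := S.C.sup S.r

/-- The closure of a central set `X`:
`cl X = {e ∈ E : X ∪ {e} ∈ 𝒞 and r (X ∪ {e}) = r X}`. -/
def cl (X : Finset E) : Finset E :=
  Finset.univ.filter fun e => insert e X ∈ S.C ∧ S.r (insert e X) = S.r X

/-- The flats of the semimatroid: central sets `X` with `cl X = X`. -/
def flats : Finset (Finset E) := S.C.filter fun X => S.cl X = X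

/-- The characteristic polynomial `χ(𝒞;t) = Σ_{X ∈ 𝒞} (−1)^{|X|} t^{r(𝒞)−r(X)}`. -/
noncomputable def charPoly : Polynomial ℤ :=
  ∑ A ∈ S.C, (-1 : Polynomial ℤ) ^ A.card * Polynomial.X ^ (S.rank - S.r A)

end Semimatroid

namespace Semimatroid

variable {E : Type*} [DecidableEq E] [Fintype E] (S : Semimatroid E)

/-- The `i`-th unsigned Whitney number of the first kind:
`w_i(𝒞) = (−1)^i ⋅ (coefficient of t^{r(𝒞)−i} in χ(𝒞;t))`. -/
noncomputable def whitney (i : ℕ) : ℤ :=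
  (-1 : ℤ) ^ i * S.charPoly.coeff (S.rank - i)

end Semimatroid

/-!
Fix a linear order on `E`. Say that `e` is active in a central set `X` if `e` lies in the closure of
`{x ∈ X | e < x}`; the central sets without active elements are those containing no broken circuit.
Toggling membership of the largest active element of `X` changes the sign `(-1) ^ #X`, but neither
the rank of `X` nor its largest active element, so in the alternating sum defining the coefficient
of `t ^ (r(𝒞) - i)` all sets with active elements cancel. A set without active elements is
independent, so each of the remaining terms is `(-1) ^ i`, and `w_i` counts the central sets of rank
`i` without active elements. In the absence of loops `∅` is such a set, and it can be enlarged one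
rank at a time: by the exchange property, inserting the least element that increases the rank
creates no active element.
-/

open Finset
open scoped symmDiff

theorem symmDiff_singleton_eq_erase {α : Type*} [DecidableEq α] {s : Finset α} {a : α}
    (ha : a ∈ s) : s ∆ {a} = s.erase a := by
  grind [mem_symmDiff]

theorem symmDiff_singleton_eq_insert {α : Type*} [DecidableEq α] {s : Finset α} {a : α}
    (ha : a ∉ s) : s ∆ {a} = insert a s := by
  grind [mem_symmDiff]

theorem sum_neg_one_pow_card_eq_zero_of_symmDiff_mem {α R : Type*} [DecidableEq α] [Ring R]
    {𝒜 : Finset (Finset α)} {a : α} (h𝒜 : ∀ X ∈ 𝒜, X ∆ {a} ∈ 𝒜) :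
    ∑ X ∈ 𝒜, (-1 : R) ^ #X = 0 := by
  refine sum_involution (fun X _ ↦ X ∆ {a}) (fun X _ ↦ ?_) (fun X _ _ ↦ ?_) h𝒜
    (fun X _ ↦ symmDiff_symmDiff_cancel_right _ _)
  · by_cases ha : a ∈ X
    · rw [symmDiff_singleton_eq_erase ha, ← card_erase_add_one ha, pow_succ]
      simp
    · rw [symmDiff_singleton_eq_insert ha, card_insert_of_notMem ha, pow_succ]
      simp
  · simp [symmDiff_eq_left]

namespace Semimatroid

variable {E : Type*} [DecidableEq E] [Fintype E] (S : Semimatroid E) {X Y Z : Finset E} {e f : E}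
  {i : ℕ}

theorem empty_mem : ∅ ∈ S.C :=
  let ⟨_, hX⟩ := S.C_nonempty
  S.mem_of_subset hX (empty_subset _)

theorem r_empty : S.r ∅ = 0 :=
  Nat.le_zero.1 (S.r_le_card S.empty_mem)

theorem r_le_rank (hX : X ∈ S.C) : S.r X ≤ S.rank :=
  le_sup (f := S.r) hX

theorem r_insert_le (h : insert e X ∈ S.C) : S.r (insert e X) ≤ S.r X + 1 := by
  have hX : X ∈ S.C := S.mem_of_subset h (subset_insert _ _)
  have he : {e} ∈ S.C := S.mem_of_subset h (by simp)
  have hsub := S.submodular he hX h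
  have hcard : S.r {e} ≤ 1 := S.r_le_card he
  rw [← insert_eq] at hsub
  omega

theorem coeff_charPoly (hi : i ≤ S.rank) :
    S.charPoly.coeff (S.rank - i) = ∑ X ∈ S.C with S.r X = i, (-1 : ℤ) ^ #X := by
  rw [charPoly, Polynomial.finsetSum_coeff, sum_filter]
  refine sum_congr rfl fun X hX ↦ ?_
  have hiff : S.rank - i = S.rank - S.r X ↔ S.r X = i := by
    have := S.r_le_rank hX
    omega
  have hsign : (-1 : Polynomial ℤ) ^ #X = Polynomial.C ((-1) ^ #X) := by simp
  rw [hsign, Polynomial.coeff_C_mul_X_pow]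
  simp only [hiff]

section Closure

variable {S}

theorem mem_cl : e ∈ S.cl X ↔ insert e X ∈ S.C ∧ S.r (insert e X) = S.r X := by
  simp [cl]

theorem r_insert_of_notMem_cl (h : insert e X ∈ S.C) (he : e ∉ S.cl X) :
    S.r (insert e X) = S.r X + 1 := by
  have hmono := S.r_mono (S.mem_of_subset h (subset_insert _ _)) h (subset_insert _ _)
  have hne : S.r (insert e X) ≠ S.r X := fun hr ↦ he (mem_cl.2 ⟨h, hr⟩)
  have hle := S.r_insert_le h
  omega

theorem cl_subset_cl (hXY : X ⊆ Y) (hY : Y ∈ S.C) : S.cl X ⊆ S.cl Y := by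
  intro e he
  obtain ⟨heX, hr⟩ := mem_cl.1 he
  by_cases heY : e ∈ Y
  · simp [mem_cl, insert_eq_of_mem heY, hY]
  have hinter : insert e X ∩ Y = X := by
    rw [insert_inter_of_notMem heY, inter_eq_left.2 hXY]
  have hunion : insert e X ∪ Y = insert e Y := by
    rw [insert_union, union_eq_right.2 hXY]
  have hmem := S.union_mem heX hY (by rw [hinter, hr])
  have hsub := S.submodular heX hY hmem
  rw [hunion] at hmem hsub
  rw [hinter] at hsub
  have hmono := S.r_mono hY hmem (subset_insert _ _)
  exact mem_cl.2 ⟨hmem, by omega⟩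

theorem union_mem_and_r_eq_of_subset_cl (hX : X ∈ S.C) (hZ : Z ⊆ S.cl X) :
    X ∪ Z ∈ S.C ∧ S.r (X ∪ Z) = S.r X := by
  induction Z using Finset.induction_on with
  | empty => simpa using hX
  | insert e Z _ ih =>
    obtain ⟨he, hZ⟩ := insert_subset_iff.1 hZ
    obtain ⟨hmem, hr⟩ := ih hZ
    have heXZ := mem_cl.1 (cl_subset_cl subset_union_left hmem he)
    rw [union_insert]
    exact ⟨heXZ.1, heXZ.2.trans hr⟩

theorem mem_cl_insert_comm (he : e ∈ S.cl (insert f X)) (heX : e ∉ S.cl X) :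
    f ∈ S.cl (insert e X) := by
  obtain ⟨hmem, hr⟩ := mem_cl.1 he
  have hfX : insert f X ∈ S.C := S.mem_of_subset hmem (subset_insert _ _)
  rw [insert_comm] at hmem hr
  have heX' : insert e X ∈ S.C := S.mem_of_subset hmem (subset_insert _ _)
  have hlt := r_insert_of_notMem_cl heX' heX
  have hle := S.r_insert_le hfX
  have hmono := S.r_mono heX' hmem (subset_insert _ _)
  exact mem_cl.2 ⟨hmem, by omega⟩

theorem cl_insert_subset_cl (hf : f ∈ S.cl X) : S.cl (insert f X) ⊆ S.cl X := by
  intro e he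
  obtain ⟨hfX, hrf⟩ := mem_cl.1 hf
  obtain ⟨hmem, hre⟩ := mem_cl.1 he
  have hsub : insert e X ⊆ insert e (insert f X) := insert_subset_insert _ (subset_insert _ _)
  have heX : insert e X ∈ S.C := S.mem_of_subset hmem hsub
  have hle := S.r_mono heX hmem hsub
  have hge := S.r_mono (S.mem_of_subset hfX (subset_insert _ _)) heX (subset_insert _ _)
  exact mem_cl.2 ⟨heX, by omega⟩

theorem mem_cl_of_mem_cl_insert (hXY : X ⊆ Y) (he : e ∉ S.cl Y) (hf : f ∈ S.cl Y)
    (hfX : f ∈ S.cl (insert e X)) : f ∈ S.cl X := by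
  by_contra hfX'
  exact he <| cl_insert_subset_cl hf <|
    cl_subset_cl (insert_subset_insert _ hXY) (mem_cl.1 hf).1 (mem_cl_insert_comm hfX hfX')

theorem exists_notMem_cl_insert_mem (hX : X ∈ S.C) (hrank : S.r X < S.rank) :
    ∃ e ∉ S.cl X, insert e X ∈ S.C := by
  obtain ⟨Y, hY, hrY⟩ := exists_mem_eq_sup S.C S.C_nonempty S.r
  obtain ⟨hmem, hr⟩ := union_mem_and_r_eq_of_subset_cl hX Subset.rfl
  obtain ⟨e, he, heX⟩ := S.augment hmem hY (by rw [hr, ← hrY]; exact hrank)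
  exact ⟨e, fun h ↦ (mem_sdiff.1 he).2 (mem_union_right _ h),
    S.mem_of_subset heX (insert_subset_insert _ subset_union_left)⟩

theorem symmDiff_singleton_mem_and_r_eq_of_mem_cl_erase (hX : X ∈ S.C)
    (he : e ∈ S.cl (X.erase e)) :
    X ∆ {e} ∈ S.C ∧ S.r (X ∆ {e}) = S.r X := by
  obtain ⟨hmem, hr⟩ := mem_cl.1 he
  by_cases heX : e ∈ X
  · rw [insert_erase heX] at hr
    rw [symmDiff_singleton_eq_erase heX]
    exact ⟨S.mem_of_subset hX (erase_subset _ _), hr.symm⟩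
  · rw [erase_eq_of_notMem heX] at hmem hr
    rw [symmDiff_singleton_eq_insert heX]
    exact ⟨hmem, hr⟩

end Closure

section BrokenCircuit

variable [LinearOrder E]

/-- The active elements of `X`: those `e`, inside or outside `X`, that are the least element of a
circuit whose other elements all lie in `X`. Phrased through the closure, to avoid circuits. -/
def active (X : Finset E) : Finset E := {e | e ∈ S.cl {x ∈ X | e < x}}

/-- The central sets containing no broken circuit, i.e. no circuit with its least element
removed. -/
def nbc : Finset (Finset E) := {X ∈ S.C | S.active X = ∅}

variable {S}

theorem mem_active : e ∈ S.active X ↔ e ∈ S.cl {x ∈ X | e < x} := by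
  simp [active]

theorem mem_nbc : X ∈ S.nbc ↔ X ∈ S.C ∧ S.active X = ∅ := by
  simp [nbc]

theorem active_subset_active (hXY : X ⊆ Y) (hY : Y ∈ S.C) : S.active X ⊆ S.active Y := by
  intro e he
  exact mem_active.2 <| cl_subset_cl (filter_subset_filter _ hXY)
    (S.mem_of_subset hY (filter_subset _ _)) (mem_active.1 he)

theorem mem_nbc_of_subset (hY : Y ∈ S.nbc) (hXY : X ⊆ Y) : X ∈ S.nbc := by
  obtain ⟨hYC, hactive⟩ := mem_nbc.1 hY
  exact mem_nbc.2 ⟨S.mem_of_subset hYC hXY,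
    subset_empty.1 (hactive ▸ active_subset_active hXY hYC)⟩

theorem r_eq_card_of_mem_nbc (hX : X ∈ S.nbc) : S.r X = #X := by
  induction X using Finset.induction_on_min with
  | empty => exact S.r_empty
  | insert e X hlt ih =>
    obtain ⟨hmem, hactive⟩ := mem_nbc.1 hX
    have he : e ∉ S.cl X := by
      have : e ∉ S.active (insert e X) := by simp [hactive]
      rwa [mem_active, filter_insert, if_neg (lt_irrefl e), filter_true_of_mem hlt] at this
    rw [r_insert_of_notMem_cl hmem he, ih (mem_nbc_of_subset hX (subset_insert _ _)),
      card_insert_of_notMem fun h ↦ (hlt e h).false]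

theorem symmDiff_singleton_mem_and_r_eq_of_mem_active (hX : X ∈ S.C) (he : e ∈ S.active X) :
    X ∆ {e} ∈ S.C ∧ S.r (X ∆ {e}) = S.r X := by
  refine symmDiff_singleton_mem_and_r_eq_of_mem_cl_erase hX <|
    cl_subset_cl (fun x hx ↦ ?_) (S.mem_of_subset hX (erase_subset _ _)) (mem_active.1 he)
  obtain ⟨hxX, hlt⟩ := mem_filter.1 hx
  exact mem_erase.2 ⟨hlt.ne', hxX⟩

theorem mem_active_symmDiff_singleton (hef : e ≤ f) :
    f ∈ S.active (X ∆ {e}) ↔ f ∈ S.active X := by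
  have hfilter : {x ∈ X ∆ {e} | f < x} = {x ∈ X | f < x} := by
    grind [mem_symmDiff]
  rw [mem_active, mem_active, hfilter]

theorem max_active_symmDiff_singleton (h : (S.active X).max = e) :
    (S.active (X ∆ {e})).max = e := by
  apply le_antisymm
  · refine Finset.max_le fun f hf ↦ ?_
    by_contra! hlt
    have hfX := (mem_active_symmDiff_singleton (WithBot.coe_lt_coe.1 hlt).le).1 hf
    exact notMem_of_max_lt_coe (h ▸ hlt) hfX
  · exact le_max ((mem_active_symmDiff_singleton le_rfl).2 (mem_of_max h))

variable (S)

theorem sum_neg_one_pow_card_max_active_eq_coe (i : ℕ) (e : E) :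
    ∑ X ∈ S.C with S.r X = i ∧ (S.active X).max = e, (-1 : ℤ) ^ #X = 0 := by
  refine sum_neg_one_pow_card_eq_zero_of_symmDiff_mem (a := e) fun X hX ↦ ?_
  obtain ⟨hXC, hr, hmax⟩ := mem_filter.1 hX
  obtain ⟨hmem, hr'⟩ := symmDiff_singleton_mem_and_r_eq_of_mem_active hXC (mem_of_max hmax)
  exact mem_filter.2 ⟨hmem, hr'.trans hr, max_active_symmDiff_singleton hmax⟩

theorem sum_neg_one_pow_card_r_eq (i : ℕ) :
    ∑ X ∈ S.C with S.r X = i, (-1 : ℤ) ^ #X = (-1) ^ i * #{X ∈ S.nbc | S.r X = i} := by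
  calc
    ∑ X ∈ S.C with S.r X = i, (-1 : ℤ) ^ #X
      = ∑ b : WithBot E, ∑ X ∈ S.C with S.r X = i ∧ (S.active X).max = b, (-1 : ℤ) ^ #X := by
        simp only [← filter_filter, sum_fiberwise]
    _ = ∑ X ∈ S.C with S.r X = i ∧ (S.active X).max = ⊥, (-1 : ℤ) ^ #X := by
        refine Fintype.sum_eq_single ⊥ fun b hb ↦ ?_
        obtain ⟨e, rfl⟩ := WithBot.ne_bot_iff_exists.1 hb
        exact S.sum_neg_one_pow_card_max_active_eq_coe i e
    _ = ∑ X ∈ S.nbc with S.r X = i, (-1 : ℤ) ^ #X := by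
        simp only [nbc, filter_filter, Finset.max_eq_bot, and_comm]
    _ = ∑ X ∈ S.nbc with S.r X = i, (-1 : ℤ) ^ i := by
        refine sum_congr rfl fun X hX ↦ ?_
        obtain ⟨hnbc, hr⟩ := mem_filter.1 hX
        rw [← r_eq_card_of_mem_nbc hnbc, hr]
    _ = (-1) ^ i * #{X ∈ S.nbc | S.r X = i} := by
        rw [sum_const, nsmul_eq_mul, mul_comm]

theorem whitney_eq_card_nbc (hi : i ≤ S.rank) :
    S.whitney i = #{X ∈ S.nbc | S.r X = i} := by
  rw [whitney, S.coeff_charPoly hi, sum_neg_one_pow_card_r_eq, ← mul_assoc, ← mul_pow]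
  simp

variable {S}

theorem exists_insert_mem_nbc (hX : X ∈ S.nbc) (hrank : S.r X < S.rank) :
    ∃ e, insert e X ∈ S.nbc ∧ S.r (insert e X) = S.r X + 1 := by
  obtain ⟨hXC, hactive⟩ := mem_nbc.1 hX
  obtain ⟨e, ⟨heX, hmem⟩, hmin⟩ : ∃ e, (e ∉ S.cl X ∧ insert e X ∈ S.C) ∧
      ∀ f, f ∉ S.cl X ∧ insert f X ∈ S.C → e ≤ f := by
    obtain ⟨e, he⟩ := exists_notMem_cl_insert_mem hXC hrank
    simpa using exists_min_image {e | e ∉ S.cl X ∧ insert e X ∈ S.C} id ⟨e, by simpa using he⟩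
  refine ⟨e, mem_nbc.2 ⟨hmem, eq_empty_of_forall_notMem fun f hf ↦ ?_⟩,
    r_insert_of_notMem_cl hmem heX⟩
  have hfX : f ∉ S.cl {x ∈ X | f < x} := by
    rw [← mem_active, hactive]
    exact notMem_empty f
  rw [mem_active, filter_insert] at hf
  split_ifs at hf with hfe
  · have hf_insert : insert f (insert e X) ∈ S.C :=
      (mem_cl.1 (cl_subset_cl (insert_subset_insert _ (filter_subset _ _)) hmem hf)).1
    have hf_cl : f ∈ S.cl X := by
      by_contra h
      exact hfe.not_ge <| hmin f
        ⟨h, S.mem_of_subset hf_insert (insert_subset_insert _ (subset_insert _ _))⟩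
    exact hfX (mem_cl_of_mem_cl_insert (filter_subset _ _) heX hf_cl hf)
  · exact hfX hf

theorem empty_mem_nbc (hloopless : ¬ ∃ e : E, {e} ∈ S.C ∧ S.r {e} = 0) : ∅ ∈ S.nbc := by
  refine mem_nbc.2 ⟨S.empty_mem, eq_empty_of_forall_notMem fun e he ↦ hloopless ⟨e, ?_⟩⟩
  simpa [mem_active, mem_cl, S.r_empty] using he

theorem exists_mem_nbc_r_eq (hempty : ∅ ∈ S.nbc) (hi : i ≤ S.rank) : ∃ X ∈ S.nbc, S.r X = i := by
  induction i with
  | zero => exact ⟨∅, hempty, S.r_empty⟩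
  | succ i ih =>
    obtain ⟨X, hX, rfl⟩ := ih (Nat.le_of_succ_le hi)
    obtain ⟨e, he, hr⟩ := exists_insert_mem_nbc hX hi
    exact ⟨insert e X, he, hr⟩

theorem filter_nbc_r_eq_zero (hempty : ∅ ∈ S.nbc) : {X ∈ S.nbc | S.r X = 0} = {∅} := by
  ext X
  rw [mem_filter, mem_singleton]
  refine ⟨fun ⟨hX, hr⟩ ↦ ?_, fun hX ↦ hX ▸ ⟨hempty, S.r_empty⟩⟩
  rwa [r_eq_card_of_mem_nbc hX, card_eq_zero] at hr

end BrokenCircuit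

end Semimatroid

/-- For a loopless semimatroid, `w_0(𝒞) = 1` and `w_i(𝒞) > 0` for all
`0 ≤ i ≤ r(𝒞)`: the coefficients of `χ(𝒞;t)` are nonzero and strictly alternate in sign,
with leading coefficient `1`. -/
theorem Semimatroid.whitney_pos
    {E : Type*} [DecidableEq E] [Fintype E] (S : Semimatroid E)
    (hloopless : ¬ ∃ e : E, {e} ∈ S.C ∧ S.r {e} = 0) :
    S.whitney 0 = 1 ∧ ∀ i ≤ S.rank, 0 < S.whitney i := by
  obtain ⟨_, _⟩ := exists_wellFoundedLT E
  have hempty := empty_mem_nbc hloopless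
  constructor
  · rw [S.whitney_eq_card_nbc (Nat.zero_le _), filter_nbc_r_eq_zero hempty, card_singleton,
      Nat.cast_one]
  · intro i hi
    obtain ⟨X, hX, hr⟩ := exists_mem_nbc_r_eq hempty hi
    rw [S.whitney_eq_card_nbc hi, Nat.cast_pos]
    exact card_pos.2 ⟨X, mem_filter.2 ⟨hX, hr⟩⟩
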